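/- arXiv:2305.09547 — 2 statements merged into one kernel-verified Lean document; each statement's English description precedes it below -/
import Mathlib

section
/- Let m be a coherent probability measure with two representations (μ₁,ν₁), (μ₂,ν₂) ∈ R(m) (so m = μᵢ + νᵢ and each pair satisfies the marginal conditions defining R). Then μ₁ and μ₂ have the same marginal distributions: μ₁ˣ = μ₂ˣ and μ₁ʸ = μ₂ʸ. -/
open MeasureTheory Set

/-- A probability measure on `ℝ × ℝ` (supported on `[0,1]²`) is *coherent* if it is the
joint law of `(X, Y)` with `X = 𝔼(Z|X)`, `Y = 𝔼(Z|Y)` a.s. for some `Z` in `[0,1]`. -/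
def IsCoherent (m : Measure (ℝ × ℝ)) : Prop :=
  ∃ (Ω : Type) (_mΩ : MeasurableSpace Ω) (P : Measure Ω) (_ : IsProbabilityMeasure P)
    (X Y Z : Ω → ℝ),
      Measurable X ∧ Measurable Y ∧ Measurable Z ∧
      (∀ ω, Z ω ∈ Set.Icc (0 : ℝ) 1) ∧
      Measure.map (fun ω => (X ω, Y ω)) P = m ∧
      X =ᵐ[P] P[Z | MeasurableSpace.comap X (borel ℝ)] ∧
      Y =ᵐ[P] P[Z | MeasurableSpace.comap Y (borel ℝ)]

/-- The pair `(μ, ν)` belongs to the class `R`. -/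
def MemR (μ ν : Measure (ℝ × ℝ)) : Prop :=
  ∀ A : Set ℝ, MeasurableSet A →
    (∫ x in A, (1 - x) ∂(μ.map Prod.fst) = ∫ x in A, x ∂(ν.map Prod.fst)) ∧
    (∫ y in A, (1 - y) ∂(μ.map Prod.snd) = ∫ y in A, y ∂(ν.map Prod.snd))

lemma marg_eq (m μ ν : Measure (ℝ × ℝ)) [IsProbabilityMeasure m] (f : ℝ × ℝ → ℝ)
    (hf : Measurable f) (hi : Integrable (fun x : ℝ => x) (m.map f)) (h : m = μ + ν)
    (hR : ∀ A : Set ℝ, MeasurableSet A →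
      ∫ x in A, (1 - x) ∂(μ.map f) = ∫ x in A, x ∂(ν.map f)) (A : Set ℝ)
    (hA : MeasurableSet A) :
    μ.map f A = ENNReal.ofReal (∫ x in A, x ∂(m.map f)) := by
  have hμ : IsFiniteMeasure μ := isFiniteMeasure_of_le m (h ▸ Measure.le_add_right le_rfl)
  have hm : m.map f = μ.map f + ν.map f := by rw [h, Measure.map_add _ _ hf]
  rw [hm] at hi ⊢
  have h1 := hi.left_of_add_measure.restrict (s := A)
  have h2 := hi.right_of_add_measure.restrict (s := A)
  have hfin : IsFiniteMeasure (μ.map f) := Measure.isFiniteMeasure_map μ f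
  rw [Measure.restrict_add, integral_add_measure h1 h2, ← hR A hA,
    ← integral_add h1 (show Integrable (fun x : ℝ => 1 - x) _ from (integrable_const _).sub h1)]
  simp [Measure.real]

theorem stmt11 (m μ₁ ν₁ μ₂ ν₂ : Measure (ℝ × ℝ)) [IsProbabilityMeasure m]
    (hcoh : IsCoherent m)
    (h1 : m = μ₁ + ν₁) (hR1 : MemR μ₁ ν₁)
    (h2 : m = μ₂ + ν₂) (hR2 : MemR μ₂ ν₂) :
    μ₁.map Prod.fst = μ₂.map Prod.fst ∧ μ₁.map Prod.snd = μ₂.map Prod.snd := by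
  obtain ⟨Ω, _, P, _, X, Y, Z, hX, hY, hZ, -, hmap, hXc, hYc⟩ := hcoh
  have iX : Integrable X P := integrable_condExp.congr hXc.symm
  have iY : Integrable Y P := integrable_condExp.congr hYc.symm
  have hi1 : Integrable (fun x : ℝ => x) (m.map Prod.fst) := by
    rw [← hmap, Measure.map_map measurable_fst (hX.prodMk hY)]
    exact (integrable_map_measure aestronglyMeasurable_id hX.aemeasurable).2 iX
  have hi2 : Integrable (fun x : ℝ => x) (m.map Prod.snd) := by
    rw [← hmap, Measure.map_map measurable_snd (hX.prodMk hY)]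
    exact (integrable_map_measure aestronglyMeasurable_id hY.aemeasurable).2 iY
  constructor
  · ext A hA
    rw [marg_eq m μ₁ ν₁ _ measurable_fst hi1 h1 (fun A hA => (hR1 A hA).1) A hA,
      marg_eq m μ₂ ν₂ _ measurable_fst hi1 h2 (fun A hA => (hR2 A hA).1) A hA]
  · ext A hA
    rw [marg_eq m μ₁ ν₁ _ measurable_snd hi2 h1 (fun A hA => (hR1 A hA).2) A hA,
      marg_eq m μ₂ ν₂ _ measurable_snd hi2 h2 (fun A hA => (hR2 A hA).2) A hA]
end

section
/- Let η be a finitely supported extreme point of the set C of coherent distributions, with unique representation (μ,ν) and quotient function q(x,y) = μ(x,y)/(μ(x,y)+ν(x,y)). Then q(x,y) = 0 for every lower out point (i.e., every support point with q(x,y) < min(x,y)), and q(x,y) = 1 for every upper out point (every support point with q(x,y) > max(x,y)). -/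
open MeasureTheory Set

theorem sum_upd {ι : Type} [DecidableEq ι] (S : Finset ι) (X δf δg : ι → ℝ) (t : ι) (ht : t ∈ S)
    (α β : ℝ) (φ : ℝ → ℝ) :
    ∑ s ∈ S, φ (X s) * ((1 - X s) * (δf s + if s = t then α else 0)
      - X s * (δg s + if s = t then β else 0)) =
    ∑ s ∈ S, φ (X s) * ((1 - X s) * δf s - X s * δg s)
      + φ (X t) * ((1 - X t) * α - X t * β) := by
  have h : φ (X t) * ((1 - X t) * α - X t * β) =
      ∑ s ∈ S, if s = t then φ (X s) * ((1 - X s) * α - X s * β) else 0 := by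
    rw [Finset.sum_ite_eq' S t]; simp [ht]
  rw [h, ← Finset.sum_add_distrib]
  apply Finset.sum_congr rfl
  intro s _
  split_ifs <;> ring

theorem sum_upd' {ι : Type} [DecidableEq ι] (S : Finset ι) (X d : ι → ℝ) (t : ι) (ht : t ∈ S)
    (α : ℝ) (φ : ℝ → ℝ) :
    ∑ s ∈ S, φ (X s) * (d s + if s = t then α else 0) =
    ∑ s ∈ S, φ (X s) * d s + φ (X t) * α := by
  have h : φ (X t) * α =
      ∑ s ∈ S, if s = t then φ (X s) * α else 0 := by
    rw [Finset.sum_ite_eq' S t]; simp [ht]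
  rw [h, ← Finset.sum_add_distrib]
  apply Finset.sum_congr rfl
  intro s _
  split_ifs <;> ring

theorem exists_pos_same {ι : Type} (S : Finset ι) (X h : ι → ℝ)
    (hb : ∀ φ : ℝ → ℝ, ∑ s ∈ S, φ (X s) * h s = 0) (u : ι) (hu : u ∈ S) (hneg : h u < 0) :
    ∃ t ∈ S, X t = X u ∧ 0 < h t := by
  by_contra hcon
  push Not at hcon
  have := hb (fun r => if r = X u then 1 else 0)
  have h2 : ∑ s ∈ S, (fun r => if r = X u then (1:ℝ) else 0) (X s) * h s < ∑ s ∈ S, (0:ℝ) := by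
    apply Finset.sum_lt_sum
    · intro s hs
      by_cases hx : X s = X u
      · simpa [hx] using hcon s hs hx
      · simp [hx]
    · exact ⟨u, hu, by simpa using hneg⟩
  simp only [Finset.sum_const_zero] at h2
  linarith

theorem exists_neg_same {ι : Type} (S : Finset ι) (X h : ι → ℝ)
    (hb : ∀ φ : ℝ → ℝ, ∑ s ∈ S, φ (X s) * h s = 0) (u : ι) (hu : u ∈ S) (hpos : 0 < h u) :
    ∃ t ∈ S, X t = X u ∧ h t < 0 := by
  obtain ⟨t, ht, h1, h2⟩ := exists_pos_same S X (fun s => - h s)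
    (fun φ => by simp [hb φ]) u hu (by simpa using hpos)
  exact ⟨t, ht, h1, by simpa using h2⟩

/-- the extremality property -/
def ExtP {ι : Type} (S : Finset ι) (X Y f g : ι → ℝ) : Prop :=
  ∀ δf δg : ι → ℝ, (∀ s ∈ S, f s = 0 → δf s = 0) → (∀ s ∈ S, g s = 0 → δg s = 0) →
    (∀ φ : ℝ → ℝ, ∑ s ∈ S, φ (X s) * ((1 - X s) * δf s - X s * δg s) = 0) →
    (∀ φ : ℝ → ℝ, ∑ s ∈ S, φ (Y s) * ((1 - Y s) * δf s - Y s * δg s) = 0) →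
    ∃ c : ℝ, ∀ s ∈ S, δf s = c * f s ∧ δg s = c * g s

/-- the uniqueness property -/
def UniP {ι : Type} (S : Finset ι) (X Y f g : ι → ℝ) : Prop :=
  ∀ d : ι → ℝ, (∀ s ∈ S, f s = 0 → 0 ≤ d s) → (∀ s ∈ S, g s = 0 → d s ≤ 0) →
    (∀ φ : ℝ → ℝ, ∑ s ∈ S, φ (X s) * d s = 0) →
    (∀ φ : ℝ → ℝ, ∑ s ∈ S, φ (Y s) * d s = 0) → ∀ s ∈ S, d s = 0

theorem ExtP.swap {ι : Type} {S : Finset ι} {X Y f g : ι → ℝ} (h : ExtP S X Y f g) :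
    ExtP S Y X f g := fun δf δg h1 h2 h3 h4 => h δf δg h1 h2 h4 h3

theorem fin_contra {ι : Type} {S : Finset ι} {X Y f g : ι → ℝ} (hE : ExtP S X Y f g)
    (p : ι) (hp : p ∈ S) (b : ℝ) (hpb : f p < b * (f p + g p))
    (δf δg : ι → ℝ) (h1 : ∀ s ∈ S, f s = 0 → δf s = 0) (h2 : ∀ s ∈ S, g s = 0 → δg s = 0)
    (hX : ∀ φ : ℝ → ℝ, ∑ s ∈ S, φ (X s) * ((1 - X s) * δf s - X s * δg s) = 0)
    (hY : ∀ φ : ℝ → ℝ, ∑ s ∈ S, φ (Y s) * ((1 - Y s) * δf s - Y s * δg s) = 0)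
    (hpf : δf p = b) (hpg : δg p = 1 - b) : False := by
  obtain ⟨c, hc⟩ := hE δf δg h1 h2 hX hY
  obtain ⟨e1, e2⟩ := hc p hp
  rw [hpf] at e1
  rw [hpg] at e2
  have : b * g p = (1 - b) * f p := by rw [e2]; rw [e1]; ring
  linarith

theorem dbl_contra {ι : Type} [DecidableEq ι] {S : Finset ι} {X Y f g : ι → ℝ}
    (hE : ExtP S X Y f g)
    (p : ι) (hp : p ∈ S) (b : ℝ) (hpb : f p < b * (f p + g p)) (hfp : f p ≠ 0)
    (δf δg : ι → ℝ) (h1 : ∀ s ∈ S, f s = 0 → δf s = 0) (h2 : ∀ s ∈ S, g s = 0 → δg s = 0)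
    (t : ι) (ht : t ∈ S) (hft : f t ≠ 0) (hgt : g t ≠ 0) (htp : p ≠ t) (e : ℝ)
    (hX : ∀ φ : ℝ → ℝ, ∑ s ∈ S, φ (X s) * ((1 - X s) * δf s - X s * δg s) = e * φ (X t))
    (hY : ∀ φ : ℝ → ℝ, ∑ s ∈ S, φ (Y s) * ((1 - Y s) * δf s - Y s * δg s) = 0)
    (hpf : δf p = b) (hpg : δg p = 1 - b) : False := by
  by_cases hxy : X t = Y t
  · obtain ⟨c, hc⟩ := hE (fun s => 0 + if s = t then Y t else 0)
      (fun s => 0 + if s = t then (1 - Y t) else 0)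
      (by intro s hs h0
          have : s ≠ t := by rintro rfl; exact hft h0
          simp [this])
      (by intro s hs h0
          have : s ≠ t := by rintro rfl; exact hgt h0
          simp [this])
      (by intro φ
          rw [sum_upd S X (fun _ => 0) (fun _ => 0) t ht, hxy]
          simp; right; ring)
      (by intro φ
          rw [sum_upd S Y (fun _ => 0) (fun _ => 0) t ht]
          simp; right; ring)
    have e1 := (hc p hp).1
    simp [htp, hfp] at e1
    subst e1
    have e2 := hc t ht
    simp at e2
    linarith [e2.1, e2.2]
  · have hne : Y t - X t ≠ 0 := sub_ne_zero.mpr (Ne.symm hxy)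
    refine fin_contra hE p hp b hpb
      (fun s => δf s + if s = t then (-e / (Y t - X t)) * Y t else 0)
      (fun s => δg s + if s = t then (-e / (Y t - X t)) * (1 - Y t) else 0)
      ?_ ?_ ?_ ?_ ?_ ?_
    · intro s hs h0
      have : s ≠ t := by rintro rfl; exact hft h0
      simp [this, h1 s hs h0]
    · intro s hs h0
      have : s ≠ t := by rintro rfl; exact hgt h0
      simp [this, h2 s hs h0]
    · intro φ
      rw [sum_upd S X δf δg t ht, hX φ]
      field_simp
      ring
    · intro φ
      rw [sum_upd S Y δf δg t ht, hY φ]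
      ring
    · simp [htp, hpf]
    · simp [htp, hpg]

/-- Alternating path from column `c` to column `y`. -/
def AltPath {ι : Type} (S : Finset ι) (X Y f g : ι → ℝ) (c y : ℝ) : Prop :=
  ∃ d : ι → ℝ, (∀ s ∈ S, f s = 0 → 0 ≤ d s) ∧ (∀ s ∈ S, g s = 0 → d s ≤ 0) ∧
    (∀ φ : ℝ → ℝ, ∑ s ∈ S, φ (X s) * d s = 0) ∧
    (∀ φ : ℝ → ℝ, ∑ s ∈ S, φ (Y s) * d s = φ c - φ y) ∧ ∃ s ∈ S, d s < 0

theorem altPath_step {ι : Type} [DecidableEq ι] {S : Finset ι} {X Y f g : ι → ℝ} {c : ℝ} {u t : ι}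
    (hu : u ∈ S) (ht : t ∈ S) (hX : X t = X u) (hgu : g u ≠ 0) (hft : f t ≠ 0) (hgt : g t = 0)
    (h : c = Y u ∨ AltPath S X Y f g c (Y u)) : AltPath S X Y f g c (Y t) := by
  have hut : t ≠ u := by rintro rfl; exact hgu hgt
  obtain ⟨d, h1, h2, h3, h4⟩ : ∃ d : ι → ℝ, (∀ s ∈ S, f s = 0 → 0 ≤ d s) ∧
    (∀ s ∈ S, g s = 0 → d s ≤ 0) ∧
    (∀ φ : ℝ → ℝ, ∑ s ∈ S, φ (X s) * d s = 0) ∧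
    (∀ φ : ℝ → ℝ, ∑ s ∈ S, φ (Y s) * d s = φ c - φ (Y u)) := by
    rcases h with rfl | ⟨d, h1, h2, h3, h4, _⟩
    · exact ⟨fun _ => 0, by simp, by simp, by simp, by simp⟩
    · exact ⟨d, h1, h2, h3, h4⟩
  refine ⟨fun s => (d s + if s = u then 1 else 0) + if s = t then -1 else 0, ?_, ?_, ?_, ?_,
    t, ht, ?_⟩
  · intro s hs h0
    have : s ≠ t := by rintro rfl; exact hft h0
    have := h1 s hs h0
    simp only [*, if_false]
    split_ifs <;> linarith
  · intro s hs h0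
    have : s ≠ u := by rintro rfl; exact hgu h0
    have := h2 s hs h0
    simp only [*, if_false]
    split_ifs <;> linarith
  · intro φ
    rw [sum_upd' S X (fun s => d s + if s = u then 1 else 0) t ht, sum_upd' S X d u hu, h3, hX]
    ring
  · intro φ
    rw [sum_upd' S Y (fun s => d s + if s = u then 1 else 0) t ht, sum_upd' S Y d u hu, h4]
    ring
  · have := h2 t ht hgt
    simp [hut]; linarith

theorem core {ι : Type} [DecidableEq ι] {S : Finset ι} {X Y f g : ι → ℝ}
    (hf : ∀ s ∈ S, 0 ≤ f s) (hg : ∀ s ∈ S, 0 ≤ g s)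
    (hX0 : ∀ s ∈ S, 0 ≤ X s) (hX1 : ∀ s ∈ S, X s ≤ 1)
    (hY0 : ∀ s ∈ S, 0 ≤ Y s) (hY1 : ∀ s ∈ S, Y s ≤ 1)
    (hX : ∀ φ : ℝ → ℝ, ∑ s ∈ S, φ (X s) * ((1 - X s) * f s - X s * g s) = 0)
    (hY : ∀ φ : ℝ → ℝ, ∑ s ∈ S, φ (Y s) * ((1 - Y s) * f s - Y s * g s) = 0)
    (hE : ExtP S X Y f g) (hU : UniP S X Y f g)
    (p : ι) (hp : p ∈ S) (hfp : 0 < f p) (hpX : f p < X p * (f p + g p))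
    (hpY : f p < Y p * (f p + g p)) : False := by
  have hgp : 0 < g p := by
    have h1 := hX1 p hp
    have h2 := hg p hp
    rcases h2.lt_or_eq with h | h
    · exact h
    · rw [← h] at hpX; nlinarith
  have main : ∀ n : ℕ, ∃ u ∈ S, ∃ D : Finset ℝ, D ⊆ S.image Y ∧ D.card = n + 1 ∧ Y p ∈ D ∧
      (∀ c ∈ D, c = Y u ∨ AltPath S X Y f g c (Y u)) ∧ (u = p ∨ f u = 0) ∧ 0 < g u ∧
      ∃ δf δg : ι → ℝ, ∃ e : ℝ, (∀ s ∈ S, f s = 0 → δf s = 0) ∧ (∀ s ∈ S, g s = 0 → δg s = 0) ∧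
      (∀ φ : ℝ → ℝ, ∑ s ∈ S, φ (X s) * ((1 - X s) * δf s - X s * δg s) = e * φ (X u)) ∧
      (∀ φ : ℝ → ℝ, ∑ s ∈ S, φ (Y s) * ((1 - Y s) * δf s - Y s * δg s) = 0) ∧
      δf p = Y p ∧ δg p = 1 - Y p := by
    intro n
    induction n with
    | zero =>
      refine ⟨p, hp, {Y p}, by simpa using ⟨p, hp, rfl⟩, by simp, by simp, by simp, Or.inl rfl,
        hgp, fun s => 0 + if s = p then Y p else 0, fun s => 0 + if s = p then (1 - Y p) else 0,
        Y p - X p, ?_, ?_, ?_, ?_, by simp, by simp⟩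
      · intro s hs h0
        have : s ≠ p := by rintro rfl; exact hfp.ne' h0
        simp [this]
      · intro s hs h0
        have : s ≠ p := by rintro rfl; exact hgp.ne' h0
        simp [this]
      · intro φ
        rw [sum_upd S X (fun _ => 0) (fun _ => 0) p hp]
        simp; ring
      · intro φ
        rw [sum_upd S Y (fun _ => 0) (fun _ => 0) p hp]
        simp; right; ring
    | succ n ih =>
      obtain ⟨u, hu, D, hD, hcard, hpD, hpath, hup, hgu, δf, δg, e, h1, h2, hδX, hδY, hpf, hpg⟩ := ih
      -- row step
      have hXu : 0 < X u := by
        rcases (hX0 u hu).lt_or_eq with h | h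
        · exact h
        exfalso
        have hz : ∀ s ∈ S, X s = X u → f s = 0 := by
          intro s hs hsu
          by_contra hne
          have hpos : 0 < f s := lt_of_le_of_ne (hf s hs) (Ne.symm hne)
          obtain ⟨t, ht, h3, h4⟩ := exists_neg_same S X _ hX s hs (by rw [hsu, ← h]; linarith)
          rw [h3, hsu, ← h] at h4
          linarith [hf t ht]
        have he : e = 0 := by
          have := hδX (fun r => if r = X u then 1 else 0)
          rw [Finset.sum_eq_zero] at this
          · simpa using this.symm
          · intro s hs
            by_cases hsu : X s = X u
            · simp [h1 s hs (hz s hs hsu), hsu, ← h]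
            · simp [hsu]
        refine fin_contra hE p hp (Y p) hpY δf δg h1 h2 ?_ hδY hpf hpg
        intro φ; rw [hδX φ, he, zero_mul]
      have hneg : (1 - X u) * f u - X u * g u < 0 := by
        rcases hup with rfl | h
        · nlinarith
        · rw [h]; nlinarith
      obtain ⟨t, ht, htu, htpos⟩ := exists_pos_same S X _ hX u hu hneg
      have htp : p ≠ t := by rintro rfl; nlinarith
      have hXt1 : X t < 1 := by
        rcases (hX1 t ht).lt_or_eq with h | h
        · exact h
        · rw [h] at htpos; linarith [hg t ht]
      have hft : 0 < f t := by
        rcases (hf t ht).lt_or_eq with h | h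
        · exact h
        · rw [← h] at htpos; nlinarith [hg t ht, hX0 t ht]
      have hgt : g t = 0 := by
        by_contra hgt
        refine dbl_contra hE p hp (Y p) hpY hfp.ne' δf δg h1 h2 t ht hft.ne' hgt htp e ?_ hδY hpf hpg
        rw [htu]; exact hδX
      have hpath' : ∀ c ∈ D, AltPath S X Y f g c (Y t) := fun c hc =>
        altPath_step hu ht htu hgu.ne' hft.ne' hgt (hpath c hc)
      have hnD : Y t ∉ D := by
        intro hmem
        obtain ⟨d, d1, d2, d3, d4, s, hs, hs'⟩ := hpath' _ hmem
        have := hU d d1 d2 d3 (by intro φ; rw [d4]; ring) s hs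
        linarith
      -- new perturbation
      have hne : 1 - X t ≠ 0 := by linarith
      obtain ⟨ef, e', hef1, hef2, hef3, hef4⟩ : ∃ ef : ι → ℝ, ∃ e' : ℝ,
        (∀ s ∈ S, f s = 0 → ef s = 0) ∧
        (∀ φ : ℝ → ℝ, ∑ s ∈ S, φ (X s) * ((1 - X s) * ef s - X s * δg s) = 0) ∧
        (∀ φ : ℝ → ℝ, ∑ s ∈ S, φ (Y s) * ((1 - Y s) * ef s - Y s * δg s) = e' * φ (Y t)) ∧
        ef p = Y p := by
        refine ⟨fun s => δf s + if s = t then -e / (1 - X t) else 0,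
          (1 - Y t) * (-e / (1 - X t)), ?_, ?_, ?_, by simp [htp, hpf]⟩
        · intro s hs h0
          have : s ≠ t := by rintro rfl; exact hft.ne' h0
          simp [this, h1 s hs h0]
        · intro φ
          have := sum_upd S X δf δg t ht (-e / (1 - X t)) 0 φ
          simp only [ite_self, add_zero] at this
          rw [this, hδX φ, ← htu]
          field_simp
          ring
        · intro φ
          have := sum_upd S Y δf δg t ht (-e / (1 - X t)) 0 φ
          simp only [ite_self, add_zero] at this
          rw [this, hδY φ]
          ring
      -- column step
      have hYt : Y t < 1 := by
        rcases (hY1 t ht).lt_or_eq with h | h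
        · exact h
        exfalso
        have hz : ∀ s ∈ S, Y s = Y t → g s = 0 := by
          intro s hs hsu
          by_contra hne
          have hpos : 0 < g s := lt_of_le_of_ne (hg s hs) (Ne.symm hne)
          obtain ⟨w, hw, h3, h4⟩ := exists_pos_same S Y _ hY s hs (by rw [hsu, h]; linarith)
          rw [h3, hsu, h] at h4
          linarith [hg w hw]
        have he : e' = 0 := by
          have := hef3 (fun r => if r = Y t then 1 else 0)
          rw [Finset.sum_eq_zero] at this
          · simpa using this.symm
          · intro s hs
            by_cases hsu : Y s = Y t
            · simp [h2 s hs (hz s hs hsu), hsu, h]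
            · simp [hsu]
        refine fin_contra hE p hp (Y p) hpY ef δg hef1 h2 hef2 ?_ hef4 hpg
        intro φ; rw [hef3 φ, he, zero_mul]
      obtain ⟨v, hv, hvt, hvneg⟩ := exists_neg_same S Y _ hY t ht
        (by rw [hgt]; nlinarith : 0 < (1 - Y t) * f t - Y t * g t)
      have hvp : p ≠ v := by rintro rfl; rw [← hvt] at hnD; exact hnD hpD
      have hYv0 : 0 < Y v := by
        rcases (hY0 v hv).lt_or_eq with h | h
        · exact h
        · rw [← h] at hvneg; linarith [hf v hv]
      have hgv : 0 < g v := by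
        rcases (hg v hv).lt_or_eq with h | h
        · exact h
        · rw [← h] at hvneg; nlinarith [hf v hv, hY1 v hv]
      have hfv : f v = 0 := by
        by_contra hfv
        refine dbl_contra hE.swap p hp (Y p) hpY hfp.ne' ef δg hef1 h2 v hv hfv hgv.ne' hvp e' ?_
          hef2 hef4 hpg
        rw [hvt]; exact hef3
      refine ⟨v, hv, insert (Y t) D, ?_, ?_, ?_, ?_, Or.inr hfv, hgv, ef,
        fun s => δg s + if s = v then e' / Y v else 0, - X v * (e' / Y v), hef1, ?_, ?_, ?_, hef4,
        by simp [hvp, hpg]⟩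
      · intro c hc
        rcases Finset.mem_insert.mp hc with rfl | hc
        · exact Finset.mem_image_of_mem _ ht
        · exact hD hc
      · rw [Finset.card_insert_of_notMem hnD, hcard]
      · exact Finset.mem_insert_of_mem hpD
      · intro c hc
        rw [hvt]
        rcases Finset.mem_insert.mp hc with rfl | hc
        · exact Or.inl rfl
        · exact Or.inr (hpath' c hc)
      · intro s hs h0
        have : s ≠ v := by rintro rfl; exact hgv.ne' h0
        simp [this, h2 s hs h0]
      · intro φ
        have := sum_upd S X ef δg v hv 0 (e' / Y v) φ
        simp only [ite_self, add_zero] at this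
        rw [this, hef2 φ]
        ring
      · intro φ
        have := sum_upd S Y ef δg v hv 0 (e' / Y v) φ
        simp only [ite_self, add_zero] at this
        rw [this, hef3 φ, ← hvt]
        field_simp
        ring
  obtain ⟨u, hu, D, hD, hcard, -⟩ := main S.card
  have h1 := Finset.card_le_card hD
  have h2 := Finset.card_image_le (s := S) (f := Y)
  omega

/-- finitely supported measure -/
noncomputable def FM (S : Finset (ℝ × ℝ)) (f : ℝ × ℝ → ℝ) : Measure (ℝ × ℝ) :=
  ∑ s ∈ S, ENNReal.ofReal (f s) • Measure.dirac s

theorem FM_integrable (S : Finset (ℝ × ℝ)) (f h : ℝ × ℝ → ℝ) : Integrable h (FM S f) := by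
  unfold FM
  rw [integrable_finset_sum_measure]
  intro s _
  exact (integrable_dirac (by simp)).smul_measure ENNReal.ofReal_ne_top

theorem FM_integral (S : Finset (ℝ × ℝ)) (f h : ℝ × ℝ → ℝ) (hf : ∀ s ∈ S, 0 ≤ f s) :
    ∫ s, h s ∂(FM S f) = ∑ s ∈ S, f s * h s := by
  unfold FM
  rw [integral_finset_sum_measure]
  · apply Finset.sum_congr rfl
    intro s hs
    rw [integral_smul_measure, integral_dirac, ENNReal.toReal_ofReal (hf s hs), smul_eq_mul]
  · intro s _
    exact (integrable_dirac (by simp)).smul_measure ENNReal.ofReal_ne_top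

instance FM_finite (S : Finset (ℝ × ℝ)) (f : ℝ × ℝ → ℝ) : IsFiniteMeasure (FM S f) := by
  constructor
  unfold FM
  simp [Measure.finset_sum_apply, ENNReal.sum_lt_top]

theorem FM_singleton (S : Finset (ℝ × ℝ)) (f : ℝ × ℝ → ℝ) {s : ℝ × ℝ} (hs : s ∈ S) :
    FM S f {s} = ENNReal.ofReal (f s) := by
  unfold FM
  rw [Measure.finset_sum_apply, Finset.sum_eq_single s]
  · simp
  · intro t _ hts
    simp [hts]
  · exact fun h => absurd hs h

theorem FM_inj {S : Finset (ℝ × ℝ)} {f g : ℝ × ℝ → ℝ} (hf : ∀ s ∈ S, 0 ≤ f s)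
    (hg : ∀ s ∈ S, 0 ≤ g s) (h : FM S f = FM S g) : ∀ s ∈ S, f s = g s := by
  intro s hs
  have := FM_singleton S f hs
  rw [h, FM_singleton S g hs] at this
  exact ((ENNReal.ofReal_eq_ofReal_iff (hg s hs) (hf s hs)).mp this).symm

theorem FM_congr {S : Finset (ℝ × ℝ)} {f g : ℝ × ℝ → ℝ} (h : ∀ s ∈ S, f s = g s) :
    FM S f = FM S g := by
  unfold FM
  exact Finset.sum_congr rfl fun s hs => by rw [h s hs]

theorem FM_add {S : Finset (ℝ × ℝ)} {f g : ℝ × ℝ → ℝ} (hf : ∀ s ∈ S, 0 ≤ f s)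
    (hg : ∀ s ∈ S, 0 ≤ g s) : FM S f + FM S g = FM S (fun s => f s + g s) := by
  unfold FM
  rw [← Finset.sum_add_distrib]
  exact Finset.sum_congr rfl fun s hs => by rw [ENNReal.ofReal_add (hf s hs) (hg s hs), add_smul]

theorem FM_smul {S : Finset (ℝ × ℝ)} {f : ℝ × ℝ → ℝ} (c : NNReal) :
    (c : ENNReal) • FM S f = FM S (fun s => c * f s) := by
  unfold FM
  rw [Finset.smul_sum]
  exact Finset.sum_congr rfl fun s hs => by
    beta_reduce
    rw [ENNReal.ofReal_mul (NNReal.coe_nonneg c), ENNReal.ofReal_coe_nnreal, smul_smul]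

theorem FM_prob {S : Finset (ℝ × ℝ)} {f : ℝ × ℝ → ℝ} (hf : ∀ s ∈ S, 0 ≤ f s)
    (h1 : ∑ s ∈ S, f s = 1) : IsProbabilityMeasure (FM S f) := by
  constructor
  unfold FM
  simp only [Measure.finset_sum_apply, Measure.smul_apply, measure_univ, smul_eq_mul, mul_one]
  rw [← ENNReal.ofReal_sum_of_nonneg hf, h1, ENNReal.ofReal_one]

theorem eq_FM (S : Finset (ℝ × ℝ)) (μ : Measure (ℝ × ℝ)) [IsFiniteMeasure μ]
    (hS : μ (↑S)ᶜ = 0) : μ = FM S (fun s => (μ {s}).toReal) := by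
  ext A hA
  unfold FM
  have h1 : μ A = μ (A ∩ S) := by
    rw [← measure_inter_add_diff A S.measurableSet]
    have : μ (A \ ↑S) = 0 := measure_mono_null (fun x hx => hx.2) hS
    rw [this, add_zero]
  classical
  have h2 : (A ∩ S : Set (ℝ × ℝ)) = ↑(S.filter (· ∈ A)) := by
    ext x; simp [and_comm]
  rw [h1, h2, ← sum_measure_singleton, Finset.sum_filter, Measure.finset_sum_apply]
  apply Finset.sum_congr rfl
  intro s _
  rw [Measure.smul_apply, Measure.dirac_apply' _ hA, ENNReal.ofReal_toReal (measure_ne_top _ _)]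
  by_cases h : s ∈ A <;> simp [h]

/-- marginal balance -/
def Bal (S : Finset (ℝ × ℝ)) (X f g : ℝ × ℝ → ℝ) : Prop :=
  ∀ φ : ℝ → ℝ, ∑ s ∈ S, φ (X s) * ((1 - X s) * f s - X s * g s) = 0

theorem FM_map_setIntegral (S : Finset (ℝ × ℝ)) (f X : ℝ × ℝ → ℝ) (hf : ∀ s ∈ S, 0 ≤ f s)
    (hX : Measurable X) (h : ℝ → ℝ) (hh : Measurable h) (A : Set ℝ) (hA : MeasurableSet A) :
    ∫ x in A, h x ∂((FM S f).map X) = ∑ s ∈ S, A.indicator (fun _ => 1) (X s) * (f s * h (X s)) := by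
  rw [setIntegral_map hA hh.aestronglyMeasurable hX.aemeasurable, ← integral_indicator (hX hA),
    FM_integral S f _ hf]
  apply Finset.sum_congr rfl
  intro s _
  by_cases hs : X s ∈ A
  · simp [Set.indicator, hs]
  · simp [Set.indicator, hs]

theorem memR_iff (S : Finset (ℝ × ℝ)) (f g : ℝ × ℝ → ℝ) (hf : ∀ s ∈ S, 0 ≤ f s)
    (hg : ∀ s ∈ S, 0 ≤ g s) :
    MemR (FM S f) (FM S g) ↔ Bal S Prod.fst f g ∧ Bal S Prod.snd f g := by
  have key : ∀ X : ℝ × ℝ → ℝ, Measurable X →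
      ((∀ A : Set ℝ, MeasurableSet A → ∫ x in A, (1 - x) ∂((FM S f).map X) =
        ∫ x in A, x ∂((FM S g).map X)) ↔ Bal S X f g) := by
    intro X hX
    have e : ∀ A : Set ℝ, MeasurableSet A → (∫ x in A, (1 - x) ∂((FM S f).map X) =
        ∫ x in A, x ∂((FM S g).map X) ↔
        ∑ s ∈ S, A.indicator (fun _ => 1) (X s) * ((1 - X s) * f s - X s * g s) = 0) := by
      intro A hA
      rw [FM_map_setIntegral S f X hf hX (fun x => 1 - x) (by fun_prop) A hA,
        FM_map_setIntegral S g X hg hX (fun x => x) (by fun_prop) A hA, ← sub_eq_zero,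
        ← Finset.sum_sub_distrib]
      have : ∀ s ∈ S, A.indicator (fun _ => (1:ℝ)) (X s) * (f s * (1 - X s)) -
        A.indicator (fun _ => 1) (X s) * (g s * X s) =
        A.indicator (fun _ => 1) (X s) * ((1 - X s) * f s - X s * g s) := by
          intro s _; ring
      rw [Finset.sum_congr rfl this]
    constructor
    · intro h φ
      classical
      rw [← Finset.sum_fiberwise_of_maps_to (g := X) (t := S.image X)
        (fun s hs => Finset.mem_image_of_mem _ hs)]
      apply Finset.sum_eq_zero
      intro r _
      have h1 := (e {r} (measurableSet_singleton r)).mp (h {r} (measurableSet_singleton r))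
      have : ∑ s ∈ S with X s = r, φ (X s) * ((1 - X s) * f s - X s * g s) = φ r *
          ∑ s ∈ S, ({r} : Set ℝ).indicator (fun _ => 1) (X s) * ((1 - X s) * f s - X s * g s) := by
        rw [Finset.sum_filter, Finset.mul_sum]
        apply Finset.sum_congr rfl
        intro s _
        by_cases hr : X s = r <;> simp [hr]
      rw [this, h1, mul_zero]
    · intro h A hA
      exact (e A hA).mpr (h _)
  constructor
  · intro h
    exact ⟨(key _ measurable_fst).mp fun A hA => (h A hA).1,
      (key _ measurable_snd).mp fun A hA => (h A hA).2⟩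
  · rintro ⟨h1, h2⟩ A hA
    exact ⟨(key _ measurable_fst).mpr h1 A hA, (key _ measurable_snd).mpr h2 A hA⟩

theorem coherent_of_bal (S : Finset (ℝ × ℝ)) (f g : ℝ × ℝ → ℝ) (hf : ∀ s ∈ S, 0 ≤ f s)
    (hg : ∀ s ∈ S, 0 ≤ g s) (h1 : ∑ s ∈ S, (f s + g s) = 1)
    (hX : Bal S Prod.fst f g) (hY : Bal S Prod.snd f g) :
    IsCoherent (FM S (fun s => f s + g s)) := by
  classical
  have hfg : ∀ s ∈ S, 0 ≤ f s + g s := fun s hs => add_nonneg (hf s hs) (hg s hs)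
  have hprob := FM_prob hfg h1
  let Z : ℝ × ℝ → ℝ := fun s =>
    ∑ t ∈ S, ({t} : Set (ℝ × ℝ)).indicator (fun _ => f t / (f t + g t)) s
  have hZm : Measurable Z := by
    refine Finset.measurable_fun_sum _ fun t _ => ?_
    exact measurable_const.indicator (measurableSet_singleton t)
  have hZS : ∀ s ∈ S, Z s = f s / (f s + g s) := by
    intro s hs
    simp only [Z]
    rw [Finset.sum_eq_single s]
    · simp
    · intro t _ hts
      simp [Ne.symm hts]
    · exact fun h => absurd hs h
  have hZN : ∀ s, s ∉ S → Z s = 0 := by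
    intro s hs
    apply Finset.sum_eq_zero
    intro t ht
    have : s ≠ t := by rintro rfl; exact hs ht
    simp [this]
  have hZ01 : ∀ s, Z s ∈ Set.Icc (0:ℝ) 1 := by
    intro s
    by_cases hs : s ∈ S
    · rw [hZS s hs]
      exact ⟨div_nonneg (hf s hs) (hfg s hs), div_le_one_of_le₀ (by linarith [hg s hs]) (hfg s hs)⟩
    · rw [hZN s hs]; simp
  have key : ∀ X : ℝ × ℝ → ℝ, Measurable X → Bal S X f g →
      X =ᵐ[FM S (fun s => f s + g s)]
        (FM S (fun s => f s + g s))[Z | MeasurableSpace.comap X (borel ℝ)] := by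
    intro X hXm hB
    have hm : MeasurableSpace.comap X (borel ℝ) ≤ (inferInstance : MeasurableSpace (ℝ × ℝ)) :=
      hXm.comap_le
    refine ae_eq_condExp_of_forall_setIntegral_eq hm (FM_integrable _ _ _)
      (fun _ _ _ => (FM_integrable _ _ _).integrableOn) ?_ ?_
    · rintro _ ⟨A, hA, rfl⟩ -
      have hA' : MeasurableSet A := hA
      rw [← integral_indicator (hXm hA'), ← integral_indicator (hXm hA'), FM_integral S _ _ hfg,
        FM_integral S _ _ hfg, ← sub_eq_zero, ← Finset.sum_sub_distrib]
      have := hB (A.indicator (fun _ => 1))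
      rw [← neg_eq_zero, ← Finset.sum_neg_distrib, ← this]
      apply Finset.sum_congr rfl
      intro s hs
      have hq : (f s + g s) * Z s = f s := by
        rw [hZS s hs]
        by_cases h0 : f s + g s = 0
        · have := hf s hs
          have := hg s hs
          rw [h0]; linarith
        · field_simp
      by_cases hsA : X s ∈ A
      · simp [Set.indicator, hsA, hq]; ring
      · simp [Set.indicator, hsA]
    · exact (Measurable.stronglyMeasurable (comap_measurable X)).aestronglyMeasurable
  refine ⟨ℝ × ℝ, inferInstance, FM S (fun s => f s + g s), hprob, Prod.fst, Prod.snd, Z,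
    measurable_fst, measurable_snd, hZm, hZ01, ?_, key _ measurable_fst hX,
    key _ measurable_snd hY⟩
  exact Measure.map_id

theorem exists_eps (S : Finset (ℝ × ℝ)) (f δ : ℝ × ℝ → ℝ) (hf : ∀ s ∈ S, 0 ≤ f s)
    (h : ∀ s ∈ S, f s = 0 → δ s = 0) :
    ∀ᶠ ε : ℝ in nhdsWithin 0 (Set.Ioi 0), ∀ s ∈ S, |ε * δ s| ≤ f s := by
  rw [Finset.eventually_all]
  intro s hs
  rcases (hf s hs).lt_or_eq with h0 | h0
  · have : Filter.Tendsto (fun ε : ℝ => |ε * δ s|) (nhdsWithin 0 (Set.Ioi 0)) (nhds |0 * δ s|) :=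
      Filter.Tendsto.mono_left (Continuous.tendsto (by fun_prop) 0) nhdsWithin_le_nhds
    rw [zero_mul, abs_zero] at this
    exact (this.eventually_lt_const h0).mono fun _ h => h.le
  · filter_upwards with ε
    rw [h s hs h0.symm, ← h0]; simp

theorem exists_eps' (S : Finset (ℝ × ℝ)) (f δ : ℝ × ℝ → ℝ) (hf : ∀ s ∈ S, 0 ≤ f s)
    (h : ∀ s ∈ S, f s = 0 → 0 ≤ δ s) :
    ∀ᶠ ε : ℝ in nhdsWithin 0 (Set.Ioi 0), ∀ s ∈ S, 0 ≤ f s + ε * δ s := by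
  have := exists_eps S f (fun s => min (δ s) 0) hf (fun s hs h0 => min_eq_right (h s hs h0))
  filter_upwards [this, self_mem_nhdsWithin] with ε h1 hε s hs
  have h2 := (abs_le.mp (h1 s hs)).1
  have h3 : ε * min (δ s) 0 ≤ ε * δ s := mul_le_mul_of_nonneg_left (min_le_left _ _) (le_of_lt hε)
  linarith

theorem bal01 {S : Finset (ℝ × ℝ)} {X f g : ℝ × ℝ → ℝ} (hf : ∀ s ∈ S, 0 ≤ f s)
    (hg : ∀ s ∈ S, 0 ≤ g s) (hpos : ∀ s ∈ S, 0 < f s + g s) (hB : Bal S X f g) :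
    ∀ s ∈ S, 0 ≤ X s ∧ X s ≤ 1 := by
  intro s hs
  constructor
  · by_contra hlt
    push Not at hlt
    obtain ⟨t, ht, h1, h2⟩ := exists_neg_same S X _ hB s hs (by
      nlinarith [hf s hs, hg s hs, hpos s hs, mul_nonneg (hf s hs) (neg_nonneg.mpr hlt.le),
        mul_pos (hpos s hs) (neg_pos.mpr hlt)])
    rw [h1] at h2
    nlinarith [hf t ht, hg t ht, mul_nonneg (hg t ht) (neg_nonneg.mpr hlt.le),
      mul_nonneg (hf t ht) (neg_nonneg.mpr hlt.le)]
  · by_contra hlt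
    push Not at hlt
    obtain ⟨t, ht, h1, h2⟩ := exists_pos_same S X _ hB s hs (by
      nlinarith [hf s hs, hg s hs, hpos s hs, mul_pos (hpos s hs) (sub_pos.mpr hlt)])
    rw [h1] at h2
    nlinarith [hf t ht, hg t ht, mul_nonneg (hg t ht) (sub_nonneg.mpr hlt.le),
      mul_nonneg (hf t ht) (sub_nonneg.mpr hlt.le)]

theorem Bal.add {S : Finset (ℝ × ℝ)} {X f g f' g' : ℝ × ℝ → ℝ} (h : Bal S X f g)
    (h' : Bal S X f' g') (c : ℝ) : Bal S X (fun s => f s + c * f' s) (fun s => g s + c * g' s) := by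
  intro φ
  have e := h φ
  have e' := h' φ
  have : ∑ s ∈ S, φ (X s) * ((1 - X s) * (f s + c * f' s) - X s * (g s + c * g' s)) =
      ∑ s ∈ S, φ (X s) * ((1 - X s) * f s - X s * g s) +
      c * ∑ s ∈ S, φ (X s) * ((1 - X s) * f' s - X s * g' s) := by
    rw [Finset.mul_sum, ← Finset.sum_add_distrib]
    exact Finset.sum_congr rfl fun s _ => by ring
  rw [this, e, e']; ring

theorem stmt16 (η μ ν : Measure (ℝ × ℝ)) [IsProbabilityMeasure η]
    (hcoh : IsCoherent η)
    (hext : ∀ (β : NNReal), 0 < β → β < 1 →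
      ∀ m₁ m₂ : Measure (ℝ × ℝ), IsProbabilityMeasure m₁ → IsProbabilityMeasure m₂ →
        IsCoherent m₁ → IsCoherent m₂ →
        η = (β : ENNReal) • m₁ + ((1 - β : NNReal) : ENNReal) • m₂ →
        m₁ = η ∧ m₂ = η)
    (S : Finset (ℝ × ℝ)) (hS : η (↑S)ᶜ = 0) (hSpos : ∀ p ∈ S, 0 < η {p})
    (hrep : η = μ + ν) (hR : MemR μ ν)
    (huniq : ∀ μ' ν' : Measure (ℝ × ℝ), MemR μ' ν' → η = μ' + ν' → μ' = μ ∧ ν' = ν) :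
    ∀ p ∈ S,
      ((μ {p}).toReal / (η {p}).toReal < min p.1 p.2 → μ {p} = 0) ∧
      ((μ {p}).toReal / (η {p}).toReal > max p.1 p.2 → ν {p} = 0) := by
  classical
  set f : ℝ × ℝ → ℝ := fun s => (μ {s}).toReal with hfdef
  set g : ℝ × ℝ → ℝ := fun s => (ν {s}).toReal with hgdef
  have hμle : μ ≤ η := by rw [hrep]; exact Measure.le_add_right le_rfl
  have hνle : ν ≤ η := by rw [hrep]; exact Measure.le_add_left le_rfl
  have : IsFiniteMeasure μ := isFiniteMeasure_of_le η hμle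
  have : IsFiniteMeasure ν := isFiniteMeasure_of_le η hνle
  have hμ : μ = FM S f := eq_FM S μ (le_antisymm ((hμle _).trans hS.le) bot_le)
  have hν : ν = FM S g := eq_FM S ν (le_antisymm ((hνle _).trans hS.le) bot_le)
  have hf : ∀ s ∈ S, 0 ≤ f s := fun s _ => ENNReal.toReal_nonneg
  have hg : ∀ s ∈ S, 0 ≤ g s := fun s _ => ENNReal.toReal_nonneg
  have hηs : ∀ s, (η {s}).toReal = f s + g s := by
    intro s
    rw [hrep, Measure.add_apply, ENNReal.toReal_add (measure_ne_top _ _) (measure_ne_top _ _)]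
  have hη : η = FM S (fun s => f s + g s) := by
    rw [← FM_add hf hg, ← hμ, ← hν]; exact hrep
  have hpos : ∀ s ∈ S, 0 < f s + g s := by
    intro s hs
    rw [← hηs]
    exact ENNReal.toReal_pos (hSpos s hs).ne' (measure_ne_top _ _)
  have htot : ∑ s ∈ S, (f s + g s) = 1 := by
    have h1 := FM_integral S (fun s => f s + g s) (fun _ => 1) (fun s hs => (hpos s hs).le)
    rw [← hη] at h1
    simpa using h1.symm
  obtain ⟨hBX, hBY⟩ : Bal S Prod.fst f g ∧ Bal S Prod.snd f g := by
    rw [← memR_iff S f g hf hg, ← hμ, ← hν]; exact hR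
  have huniqF : ∀ f' g' : ℝ × ℝ → ℝ, (∀ s ∈ S, 0 ≤ f' s) → (∀ s ∈ S, 0 ≤ g' s) →
      Bal S Prod.fst f' g' → Bal S Prod.snd f' g' → (∀ s ∈ S, f' s + g' s = f s + g s) →
      ∀ s ∈ S, f' s = f s ∧ g' s = g s := by
    intro f' g' hf' hg' h1 h2 h3
    have := huniq (FM S f') (FM S g') ((memR_iff S f' g' hf' hg').mpr ⟨h1, h2⟩)
      (by rw [FM_add hf' hg', hη]; exact (FM_congr h3).symm)
    rw [hμ, hν] at this
    exact fun s hs => ⟨FM_inj hf' hf this.1 s hs, FM_inj hg' hg this.2 s hs⟩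
  have hU : UniP S Prod.fst Prod.snd f g := by
    intro d d1 d2 d3 d4
    have hb : ∀ X : ℝ × ℝ → ℝ, (∀ φ : ℝ → ℝ, ∑ s ∈ S, φ (X s) * d s = 0) →
        Bal S X d (fun s => - d s) := by
      intro X h φ
      rw [← h φ]
      exact Finset.sum_congr rfl fun s _ => by ring
    obtain ⟨ε, ⟨h1, h2⟩, hε⟩ := (((exists_eps' S f d hf d1).and
      (exists_eps' S g (fun s => - d s) hg fun s hs h0 => neg_nonneg.mpr (d2 s hs h0))).and
      self_mem_nhdsWithin).exists
    intro s hs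
    have h := (huniqF _ _ h1 h2 (hBX.add (hb _ d3) ε) (hBY.add (hb _ d4) ε)
      (fun s _ => by ring) s hs).1
    have hε' : ε ≠ 0 := ne_of_gt hε
    have : ε * d s = 0 := by linarith
    exact (mul_eq_zero.mp this).resolve_left hε'
  have hE : ExtP S Prod.fst Prod.snd f g := by
    intro δf δg k1 k2 k3 k4
    set m : ℝ := ∑ s ∈ S, (δf s + δg s) with hm
    refine ⟨m, ?_⟩
    set a : ℝ × ℝ → ℝ := fun s => δf s + (-m) * f s with ha
    set b : ℝ × ℝ → ℝ := fun s => δg s + (-m) * g s with hb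
    have hbX : Bal S Prod.fst a b := Bal.add k3 hBX (-m)
    have hbY : Bal S Prod.snd a b := Bal.add k4 hBY (-m)
    have a0 : ∀ s ∈ S, f s = 0 → a s = 0 := fun s hs h0 => by simp [ha, h0, k1 s hs h0]
    have b0 : ∀ s ∈ S, g s = 0 → b s = 0 := fun s hs h0 => by simp [hb, h0, k2 s hs h0]
    have hab : ∑ s ∈ S, (a s + b s) = 0 := by
      have : ∑ s ∈ S, (a s + b s) = ∑ s ∈ S, (δf s + δg s) + (-m) * ∑ s ∈ S, (f s + g s) := by
        rw [Finset.mul_sum, ← Finset.sum_add_distrib]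
        exact Finset.sum_congr rfl fun s _ => by simp only [ha, hb]; ring
      rw [this, htot, ← hm]; ring
    obtain ⟨ε, ⟨h1, h2⟩, hε⟩ := (((exists_eps S f a hf a0).and
      (exists_eps S g b hg b0)).and self_mem_nhdsWithin).exists
    have hε' : ε ≠ 0 := ne_of_gt hε
    have P : ∀ c : ℝ, (c = ε ∨ c = -ε) → (∀ s ∈ S, 0 ≤ f s + c * a s) ∧
        (∀ s ∈ S, 0 ≤ g s + c * b s) := by
      intro c hc
      constructor
      · intro s hs
        have := abs_le.mp (h1 s hs)
        rcases hc with rfl | rfl <;> linarith [this.1, this.2]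
      · intro s hs
        have := abs_le.mp (h2 s hs)
        rcases hc with rfl | rfl <;> linarith [this.1, this.2]
    have T : ∀ c : ℝ, ∑ s ∈ S, ((f s + c * a s) + (g s + c * b s)) = 1 := by
      intro c
      have : ∑ s ∈ S, ((f s + c * a s) + (g s + c * b s)) =
          ∑ s ∈ S, (f s + g s) + c * ∑ s ∈ S, (a s + b s) := by
        rw [Finset.mul_sum, ← Finset.sum_add_distrib]
        exact Finset.sum_congr rfl fun s _ => by ring
      rw [this, htot, hab]; ring
    have N : ∀ c : ℝ, (c = ε ∨ c = -ε) → ∀ s ∈ S, 0 ≤ (f s + c * a s) + (g s + c * b s) :=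
      fun c hc s hs => add_nonneg ((P c hc).1 s hs) ((P c hc).2 s hs)
    have C : ∀ c : ℝ, (c = ε ∨ c = -ε) →
        IsCoherent (FM S (fun s => (f s + c * a s) + (g s + c * b s))) := fun c hc =>
      coherent_of_bal S _ _ (P c hc).1 (P c hc).2 (T c) (hBX.add hbX c) (hBY.add hbY c)
    have hhalf : (1 - (1/2) : NNReal) = 1/2 := by
      apply NNReal.eq
      rw [NNReal.coe_sub (by norm_num : (1/2 : NNReal) ≤ 1)]; norm_num
    have hfin := (hext (1/2) (by norm_num) (by norm_num) _ _ (FM_prob (N ε (Or.inl rfl)) (T ε))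
      (FM_prob (N (-ε) (Or.inr rfl)) (T (-ε))) (C ε (Or.inl rfl)) (C (-ε) (Or.inr rfl)) (by
        rw [hhalf, FM_smul, FM_smul, FM_add, hη]
        · exact FM_congr fun s _ => by push_cast; ring
        · exact fun s hs => mul_nonneg (NNReal.coe_nonneg _) (N ε (Or.inl rfl) s hs)
        · exact fun s hs => mul_nonneg (NNReal.coe_nonneg _) (N (-ε) (Or.inr rfl) s hs))).1
    rw [hη] at hfin
    have hsum := FM_inj (N ε (Or.inl rfl)) (fun s hs => (hpos s hs).le) hfin
    intro s hs
    have h := huniqF _ _ (P ε (Or.inl rfl)).1 (P ε (Or.inl rfl)).2 (hBX.add hbX ε) (hBY.add hbY ε)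
      hsum s hs
    have e1 : ε * a s = 0 := by linarith [h.1]
    have e2 : ε * b s = 0 := by linarith [h.2]
    have e3 := (mul_eq_zero.mp e1).resolve_left hε'
    have e4 := (mul_eq_zero.mp e2).resolve_left hε'
    simp only [ha] at e3
    simp only [hb] at e4
    constructor <;> linarith
  have hX01 := bal01 hf hg hpos hBX
  have hY01 := bal01 hf hg hpos hBY
  intro p hp
  rw [hηs]
  change (f p / (f p + g p) < _ → _) ∧ (f p / (f p + g p) > _ → _)
  constructor
  · intro hlt
    rw [lt_min_iff, div_lt_iff₀ (hpos p hp), div_lt_iff₀ (hpos p hp)] at hlt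
    by_contra hne
    have hfp : 0 < f p := ENNReal.toReal_pos hne (measure_ne_top _ _)
    exact core hf hg (fun s hs => (hX01 s hs).1) (fun s hs => (hX01 s hs).2)
      (fun s hs => (hY01 s hs).1) (fun s hs => (hY01 s hs).2) hBX hBY hE hU p hp hfp hlt.1 hlt.2
  · intro hlt
    rw [gt_iff_lt, max_lt_iff, lt_div_iff₀ (hpos p hp), lt_div_iff₀ (hpos p hp)] at hlt
    by_contra hne
    have hgp : 0 < g p := ENNReal.toReal_pos hne (measure_ne_top _ _)
    -- reflect
    have hflip : ∀ X u v : ℝ × ℝ → ℝ, Bal S X u v → Bal S (fun s => 1 - X s) v u := by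
      intro X u v h φ
      have := h (fun r => - φ (1 - r))
      rw [← this]
      exact Finset.sum_congr rfl fun s _ => by ring
    have hflip' : ∀ X u v : ℝ × ℝ → ℝ, Bal S (fun s => 1 - X s) u v → Bal S X v u := by
      intro X u v h
      have := hflip _ _ _ h
      simpa using this
    have hE' : ExtP S (fun s => 1 - s.1) (fun s => 1 - s.2) g f := by
      intro δf δg k1 k2 k3 k4
      obtain ⟨c, hc⟩ := hE δg δf k2 k1 (hflip' Prod.fst _ _ k3) (hflip' Prod.snd _ _ k4)
      exact ⟨c, fun s hs => (hc s hs).symm⟩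
    have hU' : UniP S (fun s => 1 - s.1) (fun s => 1 - s.2) g f := by
      intro d d1 d2 d3 d4 s hs
      have := hU (fun s => - d s) (fun s hs h0 => neg_nonneg.mpr (d2 s hs h0))
        (fun s hs h0 => neg_nonpos.mpr (d1 s hs h0))
        (fun φ => by simpa using d3 (fun r => φ (1 - r)))
        (fun φ => by simpa using d4 (fun r => φ (1 - r))) s hs
      linarith
    exact core hg hf (fun s hs => by linarith [(hX01 s hs).2]) (fun s hs => by linarith [(hX01 s hs).1])
      (fun s hs => by linarith [(hY01 s hs).2]) (fun s hs => by linarith [(hY01 s hs).1])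
      (hflip _ _ _ hBX) (hflip _ _ _ hBY) hE' hU' p hp hgp (by linarith [hlt.1]) (by linarith [hlt.2])
end
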